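/- Let p = 3, m a positive integer, and q = p^m. Then Σ_{(α,β,γ) ∈ F_q³} S(α,β,γ)⁵ = (5(p^m − 1)(8p^m − 2p − 10) + 1)·p^{3m}. -/

import Mathlib

open Complex Finset

noncomputable def zetaPow (p : ℕ) (a : ZMod p) : ℂ :=
  Complex.exp (2 * Real.pi * Complex.I * (a.val : ℂ) / (p : ℂ))

noncomputable def expSum (p m : ℕ) [Fact p.Prime]
    (α β γ : GaloisField p m) : ℂ :=
  letI : Fintype (GaloisField p m) := Fintype.ofFinite _
  ∑ x : GaloisField p m,
    zetaPow p ((Algebra.trace (ZMod p) (GaloisField p m))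
      (α * x ^ 2 + β * x ^ (p + 1) + γ * x ^ (p ^ 2 + 1)))

noncomputable def nval (p m : ℕ) (ε : ℤ) (j : ℕ) : ℂ :=
  if j % 2 = 0 then (ε : ℂ) * ((Real.sqrt ((p : ℝ) ^ (m + j)) : ℝ) : ℂ)
  else (ε : ℂ) * Complex.I * ((Real.sqrt ((p : ℝ) ^ (m + j)) : ℝ) : ℂ)

noncomputable def nn (p m : ℕ) [Fact p.Prime] (ε : ℤ) (j : ℕ) : ℕ :=
  {t : GaloisField p m × GaloisField p m × GaloisField p m |
    t ≠ (0, 0, 0) ∧ expSum p m t.1 t.2.1 t.2.2 = nval p m ε j}.ncard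

open AddChar in
/-- Orthogonality for the moments of a family of character sums over three parameters. -/
lemma sum_pow_addChar_eq_card {F ι : Type*} [Field F] [Fintype F] [DecidableEq F] [Fintype ι]
    (ψ : AddChar F ℂ) (hψ : ψ.IsPrimitive) (f g h : ι → F) (k : ℕ) :
    ∑ t : F × F × F, (∑ i, ψ (t.1 * f i + t.2.1 * g i + t.2.2 * h i)) ^ k =
      (Fintype.card F : ℂ) ^ 3 * Finset.card {x : Fin k → ι |
        ∑ j, f (x j) = 0 ∧ ∑ j, g (x j) = 0 ∧ ∑ j, h (x j) = 0} := by
  have expand (t : F × F × F) : (∑ i, ψ (t.1 * f i + t.2.1 * g i + t.2.2 * h i)) ^ k =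
      ∑ x : Fin k → ι, ψ (t.1 * ∑ j, f (x j)) * (ψ (t.2.1 * ∑ j, g (x j)) *
        ψ (t.2.2 * ∑ j, h (x j))) := by
    rw [Fintype.sum_pow]
    refine Finset.sum_congr rfl fun x _ => ?_
    have map_sum (u : Fin k → F) : ψ (∑ j, u j) = ∏ j, ψ (u j) := map_prod ψ.toMonoidHom _ _
    simp_rw [map_add_eq_mul, Finset.prod_mul_distrib, Finset.mul_sum, map_sum, mul_assoc]
  simp_rw [expand]
  rw [Finset.sum_comm, Finset.card_filter, Nat.cast_sum, Finset.mul_sum]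
  refine Finset.sum_congr rfl fun x _ => ?_
  simp_rw [Fintype.sum_prod_type, ← Finset.mul_sum, ← Finset.sum_mul, sum_mulShift _ hψ]
  split_ifs <;> simp_all
  ring

section NonzeroSolutions

variable {F : Type*} [Field F] [Fintype F] [DecidableEq F]

variable (F) in
/-- The `k`-tuples of nonzero elements whose second, fourth and tenth power sums vanish. -/
def nonzeroSolutions (k : ℕ) : Finset (Fin k → {x : F // x ≠ 0}) :=
  {x | ∑ j, (x j : F) ^ 2 = 0 ∧ ∑ j, (x j : F) ^ 4 = 0 ∧ ∑ j, (x j : F) ^ 10 = 0}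

lemma mem_nonzeroSolutions {k : ℕ} {x : Fin k → {x : F // x ≠ 0}} :
    x ∈ nonzeroSolutions F k ↔
      ∑ j, (x j : F) ^ 2 = 0 ∧ ∑ j, (x j : F) ^ 4 = 0 ∧ ∑ j, (x j : F) ^ 10 = 0 := by
  simp [nonzeroSolutions]

lemma card_nonzeroSolutions_zero : (nonzeroSolutions F 0).card = 1 := by
  simp [nonzeroSolutions]

lemma card_nonzeroSolutions_one : (nonzeroSolutions F 1).card = 0 := by
  rw [Finset.card_eq_zero, Finset.eq_empty_iff_forall_notMem]
  intro x hx
  have h := (mem_nonzeroSolutions.1 hx).1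
  simp [(x 0).2] at h

end NonzeroSolutions

section CharThree

variable {F : Type*} [Field F] [CharP F 3]

lemma three_eq_zero_of_charP : (3 : F) = 0 := by
  exact_mod_cast CharP.cast_eq_zero F 3

lemma two_ne_zero_of_charP : (2 : F) ≠ 0 := fun h =>
  one_ne_zero (α := F) (by linear_combination three_eq_zero_of_charP (F := F) - h)

lemma one_ne_neg_one_of_charP : (1 : F) ≠ -1 := fun h =>
  two_ne_zero_of_charP (F := F) (by linear_combination h)

lemma card_signs [DecidableEq F] : Finset.card ({1, -1} : Finset F) = 2 :=
  Finset.card_pair one_ne_neg_one_of_charP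

variable [Fintype F] [DecidableEq F]

lemma card_nonzeroSolutions_two : (nonzeroSolutions F 2).card = 0 := by
  rw [Finset.card_eq_zero, Finset.eq_empty_iff_forall_notMem]
  intro x hx
  obtain ⟨h₂, h₄, -⟩ := mem_nonzeroSolutions.1 hx
  simp only [Fin.sum_univ_two] at h₂ h₄
  refine pow_ne_zero 4 (x 0).2 (mul_left_cancel₀ (two_ne_zero_of_charP (F := F)) ?_)
  linear_combination h₄ + ((x 0 : F) ^ 2 - (x 1 : F) ^ 2) * h₂

/-- By Newton's identities, the product of five squares whose first, second and fifth power
sums vanish is zero. -/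
lemma card_nonzeroSolutions_five : (nonzeroSolutions F 5).card = 0 := by
  rw [Finset.card_eq_zero, Finset.eq_empty_iff_forall_notMem]
  intro x hx
  obtain ⟨h₂, h₄, h₁₀⟩ := mem_nonzeroSolutions.1 hx
  simp only [Fin.sum_univ_five] at h₂ h₄ h₁₀
  have h3 := three_eq_zero_of_charP (F := F)
  have newton (a b c d e : F) (h₁ : a + b + c + d + e = 0)
      (h₂ : a ^ 2 + b ^ 2 + c ^ 2 + d ^ 2 + e ^ 2 = 0)
      (h₅ : a ^ 5 + b ^ 5 + c ^ 5 + d ^ 5 + e ^ 5 = 0) : a * b * c * d * e = 0 := by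
    linear_combination 2 * h₅ +
      (-2 * (a ^ 4 + b ^ 4 + c ^ 4 + d ^ 4 + e ^ 4) +
        (a + b + c + d + e) * (a ^ 3 + b ^ 3 + c ^ 3 + d ^ 3 + e ^ 3) +
        2 * (a * b * c * d + a * b * c * e + a * b * d * e + a * c * d * e + b * c * d * e)) * h₁ +
      (-(a ^ 3 + b ^ 3 + c ^ 3 + d ^ 3 + e ^ 3) -
        2 * (a * b * c + a * b * d + a * b * e + a * c * d + a * c * e + a * d * e +
          b * c * d + b * c * e + b * d * e + c * d * e)) * h₂ -
      3 * (a * b * c * d * e) * h3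
  have := newton (x 0 ^ 2) (x 1 ^ 2) (x 2 ^ 2) (x 3 ^ 2) (x 4 ^ 2) h₂
    (by linear_combination h₄) (by linear_combination h₁₀)
  simp [(x 0).2, (x 1).2, (x 2).2, (x 3).2, (x 4).2] at this

/-- Three squares with vanishing first and second power sums are equal. -/
lemma card_nonzeroSolutions_three :
    (nonzeroSolutions F 3).card = (Fintype.card F - 1) * (2 * 2) := by
  have h3 := three_eq_zero_of_charP (F := F)
  have hcard : Finset.card (({0} : Finset F)ᶜ ×ˢ ({1, -1} : Finset F) ×ˢ ({1, -1} : Finset F)) =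
      (Fintype.card F - 1) * (2 * 2) := by
    rw [Finset.card_product, Finset.card_product, card_signs, Finset.card_compl,
      Finset.card_singleton]
  rw [← hcard]
  symm
  have sign_ne {s : F} (hs : s = 1 ∨ s = -1) : s ≠ 0 := by
    rcases hs with rfl | rfl <;> simp
  have key {a b c : F} (h₁ : a ^ 2 + b ^ 2 + c ^ 2 = 0) (h₂ : a ^ 4 + b ^ 4 + c ^ 4 = 0) :
      b = a ∨ b = -a := by
    apply sq_eq_sq_iff_eq_or_eq_neg.1
    have : (b ^ 2 - a ^ 2) ^ 2 = 0 := by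
      linear_combination 2 * h₂ - 2 * (c ^ 2 - a ^ 2 - b ^ 2) * h₁ -
        (a ^ 4 + b ^ 4 + 2 * a ^ 2 * b ^ 2) * h3
    exact sub_eq_zero.1 (pow_eq_zero_iff two_ne_zero |>.1 this)
  refine Finset.card_bij (fun t ht => ![⟨t.1, by simpa using (Finset.mem_product.1 ht).1⟩,
      ⟨t.2.1 * t.1, ?_⟩, ⟨t.2.2 * t.1, ?_⟩]) ?_ ?_ ?_
  · simp only [Finset.mem_product, Finset.mem_compl, Finset.mem_insert,
      Finset.mem_singleton] at ht
    exact mul_ne_zero (sign_ne ht.2.1) ht.1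
  · simp only [Finset.mem_product, Finset.mem_compl, Finset.mem_insert,
      Finset.mem_singleton] at ht
    exact mul_ne_zero (sign_ne ht.2.2) ht.1
  · rintro ⟨a, s, t⟩ h
    simp only [Finset.mem_product, Finset.mem_compl, Finset.mem_insert,
      Finset.mem_singleton] at h
    obtain ⟨-, rfl | rfl, rfl | rfl⟩ := h <;>
      refine mem_nonzeroSolutions.2 ⟨?_, ?_, ?_⟩ <;>
      simp only [Fin.sum_univ_three, Matrix.cons_val] <;>
      first
        | linear_combination a ^ 2 * h3
        | linear_combination a ^ 4 * h3
        | linear_combination a ^ 10 * h3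
  · rintro ⟨a, s, t⟩ h ⟨a', s', t'⟩ h' heq
    simp only [Finset.mem_product, Finset.mem_compl, Finset.mem_singleton] at h
    have e0 := congrArg Subtype.val (congrFun heq 0)
    have e1 := congrArg Subtype.val (congrFun heq 1)
    have e2 := congrArg Subtype.val (congrFun heq 2)
    simp only [Matrix.cons_val] at e0 e1 e2
    subst e0
    rw [mul_right_cancel₀ h.1 e1, mul_right_cancel₀ h.1 e2]
  · intro x hx
    obtain ⟨h₂, h₄, -⟩ := mem_nonzeroSolutions.1 hx
    simp only [Fin.sum_univ_three] at h₂ h₄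
    have h1 := key h₂ h₄
    have h2 := key (a := (x 0 : F)) (b := x 2) (c := x 1) (by linear_combination h₂)
      (by linear_combination h₄)
    have h0 := (x 0).2
    refine ⟨⟨x 0, x 1 / x 0, x 2 / x 0⟩, ?_, ?_⟩
    · simp only [Finset.mem_product, Finset.mem_compl, Finset.mem_insert,
        Finset.mem_singleton]
      refine ⟨h0, ?_, ?_⟩
      · rcases h1 with h | h <;> simp [h, h0]
      · rcases h2 with h | h <;> simp [h, h0]
    · funext j
      fin_cases j <;> simp [h0]

/-- In characteristic three, Heron's factorization solves the equations in four unknowns: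
up to signs the last two are the sum and the difference of the first two. -/
lemma card_nonzeroSolutions_four :
    (nonzeroSolutions F 4).card =
      (Fintype.card F - 1) * ((Fintype.card F - 3) * (2 * (2 * 2))) := by
  have h3 := three_eq_zero_of_charP (F := F)
  have h2 := two_ne_zero_of_charP (F := F)
  have hcard : Finset.card (({0} : Finset F)ᶜ ×ˢ ({0, 1, -1} : Finset F)ᶜ ×ˢ
      ({1, -1} : Finset F) ×ˢ ({1, -1} : Finset F) ×ˢ ({1, -1} : Finset F)) =
      (Fintype.card F - 1) * ((Fintype.card F - 3) * (2 * (2 * 2))) := by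
    simp only [Finset.card_product, card_signs, Finset.card_compl, Finset.card_singleton]
    rw [Finset.card_insert_of_notMem (by simp), card_signs]
  rw [← hcard]
  symm
  have sign_sq {s : F} (hs : s = 1 ∨ s = -1) : s ^ 2 = 1 := by
    rcases hs with rfl | rfl <;> simp
  have ne_add {a u s t : F} (ha : a ≠ 0) (hu : ¬(u = 0 ∨ u = 1 ∨ u = -1)) (ht : t = 1 ∨ t = -1)
      (hs : s = 1 ∨ s = -1) : s * (1 + t * u) * a ≠ 0 := by
    push Not at hu
    refine mul_ne_zero (mul_ne_zero (by rcases hs with rfl | rfl <;> simp) fun h => ?_) ha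
    rcases ht with rfl | rfl
    · exact hu.2.2 (by linear_combination h)
    · exact hu.2.1 (by linear_combination -h)
  have ne_sub {a u s t : F} (ha : a ≠ 0) (hu : ¬(u = 0 ∨ u = 1 ∨ u = -1)) (ht : t = 1 ∨ t = -1)
      (hs : s = 1 ∨ s = -1) : s * (1 - t * u) * a ≠ 0 := by
    have := ne_add (t := -t) ha hu (by rcases ht with rfl | rfl <;> simp) hs
    rwa [neg_mul, ← sub_eq_add_neg] at this
  refine Finset.card_bij (fun t ht => ![⟨t.1, by simpa using (Finset.mem_product.1 ht).1⟩,
      ⟨t.2.1 * t.1, ?_⟩, ⟨t.2.2.2.1 * (1 + t.2.2.1 * t.2.1) * t.1, ?_⟩,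
      ⟨t.2.2.2.2 * (1 - t.2.2.1 * t.2.1) * t.1, ?_⟩]) ?_ ?_ ?_
  · simp only [Finset.mem_product, Finset.mem_compl, Finset.mem_insert,
      Finset.mem_singleton] at ht
    exact mul_ne_zero (fun h => ht.2.1 (.inl h)) ht.1
  · simp only [Finset.mem_product, Finset.mem_compl, Finset.mem_insert,
      Finset.mem_singleton] at ht
    exact ne_add ht.1 ht.2.1 ht.2.2.1 ht.2.2.2.1
  · simp only [Finset.mem_product, Finset.mem_compl, Finset.mem_insert,
      Finset.mem_singleton] at ht
    exact ne_sub ht.1 ht.2.1 ht.2.2.1 ht.2.2.2.2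
  · rintro ⟨a, u, t, s, r⟩ h
    simp only [Finset.mem_product, Finset.mem_compl, Finset.mem_insert,
      Finset.mem_singleton] at h
    obtain ⟨-, -, rfl | rfl, rfl | rfl, rfl | rfl⟩ := h <;>
      refine mem_nonzeroSolutions.2 ⟨?_, ?_, ?_⟩ <;>
      simp only [Fin.sum_univ_four, Matrix.cons_val] <;>
      first
        | linear_combination a ^ 2 * (1 + u ^ 2) * h3
        | linear_combination a ^ 4 * (1 + 4 * u ^ 2 + u ^ 4) * h3
        | linear_combination a ^ 10 *
            (1 + 30 * u ^ 2 + 140 * u ^ 4 + 140 * u ^ 6 + 30 * u ^ 8 + u ^ 10) * h3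
  · rintro ⟨a, u, t, s, r⟩ h ⟨a', u', t', s', r'⟩ h' heq
    simp only [Finset.mem_product, Finset.mem_compl, Finset.mem_insert,
      Finset.mem_singleton] at h h'
    have e0 := congrArg Subtype.val (congrFun heq 0)
    have e1 := congrArg Subtype.val (congrFun heq 1)
    have e2 := congrArg Subtype.val (congrFun heq 2)
    have e3 := congrArg Subtype.val (congrFun heq 3)
    simp only [Matrix.cons_val] at e0 e1 e2 e3
    subst e0
    obtain ⟨ha, hu, ht, hs, hr⟩ := h
    obtain ⟨-, -, ht', hs', hr'⟩ := h'
    obtain rfl := mul_right_cancel₀ ha e1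
    replace e2 := mul_right_cancel₀ ha e2
    replace e3 := mul_right_cancel₀ ha e3
    have htt : t = t' := by
      have : 2 * u * t = 2 * u * t' := by
        linear_combination (s * (1 + t * u) + s' * (1 + t' * u)) * e2 -
          (1 + t * u) ^ 2 * sign_sq hs + (1 + t' * u) ^ 2 * sign_sq hs' -
          u ^ 2 * sign_sq ht + u ^ 2 * sign_sq ht'
      exact mul_left_cancel₀ (mul_ne_zero h2 fun h => hu (.inl h)) this
    subst htt
    rw [mul_right_cancel₀ (by simpa using ne_add one_ne_zero hu ht (.inl rfl)) e2,
      mul_right_cancel₀ (by simpa using ne_sub one_ne_zero hu ht (.inl rfl)) e3]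
  · intro x hx
    obtain ⟨h₂, h₄, -⟩ := mem_nonzeroSolutions.1 hx
    simp only [Fin.sum_univ_four] at h₂ h₄
    have ha := (x 0).2
    have hb := (x 1).2
    have hc := (x 2).2
    have hd := (x 3).2
    obtain ⟨t, ht, hct⟩ : ∃ t : F, (t = 1 ∨ t = -1) ∧
        (x 2 : F) ^ 2 = (x 0 + t * x 1) ^ 2 := by
      have heron :
          ((x 2 : F) ^ 2 - (x 0 + 1 * x 1) ^ 2) * (x 2 ^ 2 - (x 0 + -1 * x 1) ^ 2) = 0 := by
        linear_combination 2 * h₄ -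
          2 * ((x 3 : F) ^ 2 - (x 0 ^ 2 + x 1 ^ 2 + x 2 ^ 2)) * h₂ -
          ((x 0 : F) ^ 4 + x 1 ^ 4 + x 2 ^ 4 +
            2 * (x 0 ^ 2 * x 1 ^ 2 + x 0 ^ 2 * x 2 ^ 2 + x 1 ^ 2 * x 2 ^ 2)) * h3
      rcases mul_eq_zero.1 heron with h | h
      · exact ⟨1, .inl rfl, sub_eq_zero.1 h⟩
      · exact ⟨-1, .inr rfl, sub_eq_zero.1 h⟩
    have hdt : (x 3 : F) ^ 2 = (x 0 - t * x 1) ^ 2 := by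
      linear_combination h₂ - hct - 2 * (x 1 : F) ^ 2 * sign_sq ht -
        ((x 0 : F) ^ 2 + x 1 ^ 2) * h3
    have exists_sign {y z : F} (h : y ^ 2 = z ^ 2) : ∃ s : F, (s = 1 ∨ s = -1) ∧ y = s * z := by
      rcases sq_eq_sq_iff_eq_or_eq_neg.1 h with h | h
      · exact ⟨1, .inl rfl, by simp [h]⟩
      · exact ⟨-1, .inr rfl, by simp [h]⟩
    obtain ⟨s, hs, hcs⟩ := exists_sign hct
    obtain ⟨r, hr, hdr⟩ := exists_sign hdt
    have hadd : (x 0 : F) + t * x 1 ≠ 0 := right_ne_zero_of_mul (hcs ▸ hc)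
    have hsub : (x 0 : F) - t * x 1 ≠ 0 := right_ne_zero_of_mul (hdr ▸ hd)
    refine ⟨⟨x 0, x 1 / x 0, t, s, r⟩, ?_, ?_⟩
    · simp only [Finset.mem_product, Finset.mem_compl, Finset.mem_insert,
        Finset.mem_singleton]
      refine ⟨ha, ?_, ht, hs, hr⟩
      rw [div_eq_iff ha, div_eq_iff ha, div_eq_iff ha]
      rintro (h | h | h)
      · exact hb (by simpa using h)
      all_goals rcases ht with rfl | rfl <;> simp [h] at hadd hsub
    · funext j
      apply Subtype.ext
      fin_cases j <;> simp [hcs, hdr] <;> field_simp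

end CharThree

/-- The character `z ↦ ζ_p ^ Tr z` of the field with `p ^ m` elements. -/
noncomputable def traceChar (p m : ℕ) [Fact p.Prime] : AddChar (GaloisField p m) ℂ :=
  (ZMod.stdAddChar (N := p)).compAddMonoidHom
    (Algebra.trace (ZMod p) (GaloisField p m)).toAddMonoidHom

lemma traceChar_apply (p m : ℕ) [Fact p.Prime] (z : GaloisField p m) :
    traceChar p m z = zetaPow p (Algebra.trace (ZMod p) (GaloisField p m) z) := by
  simp only [traceChar, AddChar.compAddMonoidHom_apply, zetaPow, ZMod.stdAddChar_apply,
    ZMod.toCircle_apply]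
  rfl

lemma traceChar_isPrimitive (p m : ℕ) [Fact p.Prime] : (traceChar p m).IsPrimitive := by
  refine AddChar.IsPrimitive.of_ne_one ?_
  intro h
  obtain ⟨b, hb⟩ := Algebra.trace_surjective (ZMod p) (GaloisField p m) 1
  have h1 : ZMod.stdAddChar (1 : ZMod p) = 1 := by
    rw [← hb]
    exact DFunLike.congr_fun h b
  rw [← AddChar.map_zero_eq_one (ZMod.stdAddChar (N := p))] at h1
  exact one_ne_zero (ZMod.injective_stdAddChar h1)

lemma expSum_three_eq (m : ℕ) [Fact (Nat.Prime 3)] [inst : Fintype (GaloisField 3 m)]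
    [DecidableEq (GaloisField 3 m)] (α β γ : GaloisField 3 m) :
    expSum 3 m α β γ = (∑ x : {x : GaloisField 3 m // x ≠ 0}, traceChar 3 m
      (α * (x : GaloisField 3 m) ^ 2 + β * (x : GaloisField 3 m) ^ 4 +
        γ * (x : GaloisField 3 m) ^ 10)) + 1 := by
  rw [expSum, Subsingleton.elim (Fintype.ofFinite _) inst,
    Fintype.sum_eq_add_sum_subtype_ne _ (0 : GaloisField 3 m), add_comm]
  simp only [← traceChar_apply]
  simp

lemma fifth_moment_expSum_three (m : ℕ) (hm : 0 < m) [Fact (Nat.Prime 3)]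
    [Fintype (GaloisField 3 m)] :
    ∑ t : GaloisField 3 m × GaloisField 3 m × GaloisField 3 m,
      (expSum 3 m t.1 t.2.1 t.2.2) ^ 5 =
        (5 * ((3 : ℂ) ^ m - 1) * (8 * (3 : ℂ) ^ m - 2 * 3 - 10) + 1) * (3 : ℂ) ^ (3 * m) := by
  classical
  have hq : Fintype.card (GaloisField 3 m) = 3 ^ m := by
    rw [← Nat.card_eq_fintype_card, GaloisField.card 3 m hm.ne']
  have moment (k : ℕ) := sum_pow_addChar_eq_card (traceChar 3 m) (traceChar_isPrimitive 3 m)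
    (fun x : {x : GaloisField 3 m // x ≠ 0} => (x : GaloisField 3 m) ^ 2)
    (fun x => (x : GaloisField 3 m) ^ 4) (fun x => (x : GaloisField 3 m) ^ 10) k
  change ∀ k, _ = _ * ((nonzeroSolutions (GaloisField 3 m) k).card : ℂ) at moment
  simp_rw [expSum_three_eq, add_pow, one_pow, mul_one]
  rw [Finset.sum_comm]
  simp_rw [← Finset.sum_mul, moment]
  have h1 : 1 ≤ 3 ^ m := Nat.one_le_pow _ _ (by norm_num)
  have h3 : 3 ≤ 3 ^ m := Nat.le_self_pow hm.ne' 3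
  simp only [Finset.sum_range_succ, Finset.sum_range_zero, card_nonzeroSolutions_zero,
    card_nonzeroSolutions_one, card_nonzeroSolutions_two, card_nonzeroSolutions_three,
    card_nonzeroSolutions_four, card_nonzeroSolutions_five, hq]
  push_cast [Nat.cast_sub h1, Nat.cast_sub h3]
  norm_num [Nat.choose]
  ring

theorem sum_S_fifth_moment (m : ℕ) (hm : 0 < m) :
    letI : Fact (Nat.Prime 3) := ⟨by norm_num⟩
    letI : Fintype (GaloisField 3 m) := Fintype.ofFinite _
    ∑ t : GaloisField 3 m × GaloisField 3 m × GaloisField 3 m,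
      (expSum 3 m t.1 t.2.1 t.2.2) ^ 5 =
        (5 * ((3 : ℂ) ^ m - 1) * (8 * (3 : ℂ) ^ m - 2 * 3 - 10) + 1) * (3 : ℂ) ^ (3 * m) := by
  exact @fifth_moment_expSum_three m hm _ (Fintype.ofFinite _)
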